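/- Let Q₁ be a nonzero element of K with [w₁+1] ≠ 0, set κ_L = [w₁]/[w₁+1] and δ = q + q^{−1}, and let κ_R be an arbitrary element of K. For n ≥ 3 let M′ be the (n+1)×(n+1) matrix over K, with rows and columns indexed by 0,…,n, defined by: M′₀₀ = M′₀₁ = M′₁₀ = κ_L; M′₀₂ = M′₂₀ = 1; M′_{ii} = δ for 1 ≤ i ≤ n−1; M′_{i,i+1} = M′_{i+1,i} = 1 for 1 ≤ i ≤ n−2; M′_{n−1,n} = M′_{n,n−1} = M′_{nn} = κ_R; and all other entries 0. Then det M′ = κ_R · ([w₁+2]/[w₁+1]²) · ([w₁+2−n] − κ_R·[w₁+3−n]). -/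

import Mathlib

/-- The shifted quantum bracket `[w+m] = (Q·q^m - Q⁻¹·q^{-m})/(q - q⁻¹)`,
where `Q` is thought of as `q^w` for a formal exponent `w`. -/
noncomputable def qbr {K : Type*} [Field K] (q Q : K) (m : ℤ) : K :=
  (Q * q ^ m - Q⁻¹ * q ^ (-m)) / (q - q⁻¹)

def ldet {K : Type*} [Field K] (f : ℕ → ℕ → K) (m : ℕ) : K :=
  (Matrix.of fun i j : Fin m => f i j).det

lemma ldet_last_col {K : Type*} [Field K] (m : ℕ) (N : Matrix (Fin (m+1)) (Fin (m+1)) K)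
    (h : ∀ i : Fin m, N i.castSucc (Fin.last m) = 0) :
    N.det = N (Fin.last m) (Fin.last m) * (N.submatrix Fin.castSucc Fin.castSucc).det := by
  rw [Matrix.det_succ_column N (Fin.last m), Fin.sum_univ_castSucc]
  simp only [h, mul_zero, zero_mul, Finset.sum_const_zero, zero_add, Fin.succAbove_last]
  rw [Even.neg_one_pow ⟨_, rfl⟩, one_mul]

lemma ldet_rec {K : Type*} [Field K] (f : ℕ → ℕ → K) (m : ℕ)
    (h1 : ∀ j < m, f (m+1) j = 0) (h2 : ∀ i < m, f i (m+1) = 0) :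
    ldet f (m+2) = f (m+1) (m+1) * ldet f (m+1) - f (m+1) m * f m (m+1) * ldet f m := by
  unfold ldet
  rw [Matrix.det_succ_row _ (Fin.last (m+1)), Fin.sum_univ_castSucc, Fin.sum_univ_castSucc]
  have hz : ∀ j : Fin m, f (m+1) j = 0 := fun j => h1 j j.2
  rw [ldet_last_col m (Matrix.submatrix _ _ (Fin.castSucc (Fin.last m)).succAbove)]
  · have e1 : ((Fin.last m).castSucc).succAbove (Fin.last m) = Fin.last (m+1) := by
      rw [Fin.succAbove_castSucc_self]; simp
    have e2 : ((Fin.last m).castSucc).succAbove ∘ Fin.castSucc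
        = fun i : Fin m => i.castSucc.castSucc := by
      funext i
      simp only [Function.comp]
      rw [Fin.succAbove_of_castSucc_lt]
      simp [Fin.lt_def]
    have e3 : (-1 : K) ^ (m + 1 + m) = -1 := Odd.neg_one_pow ⟨m, by ring⟩
    have e4 : (-1 : K) ^ (m + 1 + (m + 1)) = 1 := Even.neg_one_pow ⟨_, rfl⟩
    simp only [Matrix.submatrix_submatrix, e2, Matrix.submatrix_apply, e1, Matrix.of_apply,
      Fin.val_last, Fin.val_castSucc, hz, mul_zero, zero_mul, Finset.sum_const_zero, zero_add,
      Fin.succAbove_last, e3, e4]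
    have a1 : (Matrix.submatrix (Matrix.of fun i j : Fin (m+2) => f i j) (Fin.castSucc ∘ Fin.castSucc)
       (fun i : Fin m => i.castSucc.castSucc)) = Matrix.of fun i j : Fin m => f i j := by
      ext i j; simp
    have a2 : (Matrix.submatrix (Matrix.of fun i j : Fin (m+2) => f i j) Fin.castSucc
       Fin.castSucc) = Matrix.of fun i j : Fin (m+1) => f i j := by
      ext i j; simp
    rw [a1, a2]; ring
  · intro i
    have e1 : ((Fin.last m).castSucc).succAbove (Fin.last m) = Fin.last (m+1) := by
      rw [Fin.succAbove_castSucc_self]; simp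
    simp [e1, h2 i i.2]

lemma qbr_rec {K : Type*} [Field K] (q Q : K) (hq : q ≠ 0) (m : ℤ) :
    (q + q⁻¹) * qbr q Q m = qbr q Q (m+1) + qbr q Q (m-1) := by
  unfold qbr
  have a : q ^ (m+1) = q ^ m * q := zpow_add_one₀ hq m
  have b : q ^ (m-1) = q ^ m * q⁻¹ := zpow_sub_one₀ hq m
  have c : q ^ (-(m+1)) = q ^ (-m) * q⁻¹ := by rw [neg_add, ← sub_eq_add_neg, zpow_sub_one₀ hq]
  have d : q ^ (-(m-1)) = q ^ (-m) * q := by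
    rw [show -(m-1) = -m + 1 by ring, zpow_add_one₀ hq]
  rw [a, b, c, d]; ring

def gmat {K : Type*} [Field K] (κL κR δ : K) (n : ℕ) (i j : ℕ) : K :=
  if (i = 0 ∧ j = 0) ∨ (i = 0 ∧ j = 1) ∨ (i = 1 ∧ j = 0) then κL
  else if (i = 0 ∧ j = 2) ∨ (i = 2 ∧ j = 0) then 1
  else if (i = n - 1 ∧ j = n) ∨ (i = n ∧ j = n - 1) ∨ (i = n ∧ j = n) then κR
  else if i = j then δ
  else if i + 1 = j ∨ j + 1 = i then 1
  else 0

lemma gmat_ldet {K : Type*} [Field K] (q Q κL κR δ : K) (hq : q ≠ 0) (hw1 : qbr q Q 1 ≠ 0)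
    (hκL : κL = qbr q Q 0 / qbr q Q 1) (hδ : δ = q + q⁻¹) (n : ℕ) (hn : 3 ≤ n) (m : ℕ)
    (hm : m + 3 ≤ n) :
    ldet (gmat κL κR δ n) (m+2) = qbr q Q 2 / (qbr q Q 1)^2 * qbr q Q (-m) ∧
    ldet (gmat κL κR δ n) (m+3) = qbr q Q 2 / (qbr q Q 1)^2 * qbr q Q (-m-1) := by
  induction m with
  | zero =>
    obtain ⟨n, rfl⟩ : ∃ k, n = k + 3 := ⟨n - 3, by omega⟩
    have r1 := qbr_rec q Q hq 1
    have r0 := qbr_rec q Q hq 0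
    rw [← hδ] at r1 r0
    norm_num at r1 r0
    have k1 : κL * qbr q Q 1 = qbr q Q 0 := by rw [hκL]; field_simp
    have d1 : qbr q Q 2 = (δ - κL) * qbr q Q 1 := by linear_combination -r1 + k1
    have d2 : qbr q Q (-1) = (κL * δ - 1) * qbr q Q 1 := by linear_combination -r0 - δ * k1
    constructor
    · simp [ldet, Matrix.det_fin_two, gmat]
      rw [d1, ← k1]; field_simp
    · simp [ldet, Matrix.det_fin_three, gmat]
      rw [d1, d2]; field_simp; ring
  | succ m ih =>
    obtain ⟨i1, i2⟩ := ih (by omega)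
    refine ⟨by rw [show m + 1 + 2 = m + 3 by ring, i2]; push_cast; ring_nf, ?_⟩
    rw [show m + 1 + 3 = (m + 2) + 2 by ring, ldet_rec]
    · have g1 : gmat κL κR δ n (m+2+1) (m+2+1) = δ := by
        unfold gmat; grind
      have g2 : gmat κL κR δ n (m+2+1) (m+2) = 1 := by
        unfold gmat; grind
      have g3 : gmat κL κR δ n (m+2) (m+2+1) = 1 := by
        unfold gmat; grind
      have r := qbr_rec q Q hq (-m-1)
      rw [← hδ, show (-(m:ℤ)-1+1) = -m by ring] at r
      rw [g1, g2, g3, i1, show m + 2 + 1 = m + 3 by ring, i2]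
      push_cast
      rw [show (-((m:ℤ)+1)-1) = -m-1-1 by ring]
      linear_combination (qbr q Q 2 / (qbr q Q 1)^2) * r
    · intro j hj; unfold gmat; grind
    · intro j hj; unfold gmat; grind

/-- Let `κ_L = [w₁]/[w₁+1]`, `δ = q + q⁻¹`, `κ_R ∈ K` arbitrary, and for `n ≥ 3` let `M′` be
the `(n+1)×(n+1)` matrix with `M′₀₀ = M′₀₁ = M′₁₀ = κ_L`, `M′₀₂ = M′₂₀ = 1`, diagonal
entries `δ` for `1 ≤ i ≤ n-1`, entries `1` at `(i,i+1)`, `(i+1,i)` for `1 ≤ i ≤ n-2`,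
`M′_{n-1,n} = M′_{n,n-1} = M′_{nn} = κ_R`, and `0` elsewhere. Then
`det M′ = κ_R·([w₁+2]/[w₁+1]²)·([w₁+2-n] - κ_R·[w₁+3-n])`. -/
theorem symplectic_blob_gram_det_laplace {K : Type*} [Field K] (q : K) (hq : q ≠ 0)
    (hq2 : q ^ 2 ≠ 1)
    (Q₁ : K) (hQ₁ : Q₁ ≠ 0) (hw1 : qbr q Q₁ 1 ≠ 0)
    (κL κR δ : K) (hκL : κL = qbr q Q₁ 0 / qbr q Q₁ 1) (hδ : δ = q + q⁻¹)
    (n : ℕ) (hn : 3 ≤ n)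
    (M' : Matrix (Fin (n + 1)) (Fin (n + 1)) K)
    (hM' : ∀ i j : Fin (n + 1), M' i j =
      if ((i : ℕ) = 0 ∧ (j : ℕ) = 0) ∨ ((i : ℕ) = 0 ∧ (j : ℕ) = 1) ∨
          ((i : ℕ) = 1 ∧ (j : ℕ) = 0) then κL
      else if ((i : ℕ) = 0 ∧ (j : ℕ) = 2) ∨ ((i : ℕ) = 2 ∧ (j : ℕ) = 0) then 1
      else if ((i : ℕ) = n - 1 ∧ (j : ℕ) = n) ∨ ((i : ℕ) = n ∧ (j : ℕ) = n - 1) ∨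
          ((i : ℕ) = n ∧ (j : ℕ) = n) then κR
      else if (i : ℕ) = (j : ℕ) then δ
      else if (i : ℕ) + 1 = (j : ℕ) ∨ (j : ℕ) + 1 = (i : ℕ) then 1
      else 0) :
    M'.det = κR * (qbr q Q₁ 2 / (qbr q Q₁ 1) ^ 2) *
      (qbr q Q₁ (2 - n) - κR * qbr q Q₁ (3 - n)) := by
  obtain ⟨m, rfl⟩ : ∃ k, n = k + 3 := ⟨n - 3, by omega⟩
  have e : M'.det = ldet (gmat κL κR δ (m+3)) (m+2+2) := by
    unfold ldet
    congr 1
    ext i j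
    rw [hM']; rfl
  obtain ⟨i1, i2⟩ := gmat_ldet q Q₁ κL κR δ hq hw1 hκL hδ (m+3) hn m le_rfl
  rw [e, ldet_rec]
  · have g1 : gmat κL κR δ (m+3) (m+2+1) (m+2+1) = κR := by
      unfold gmat; grind
    have g2 : gmat κL κR δ (m+3) (m+2+1) (m+2) = κR := by
      unfold gmat; grind
    have g3 : gmat κL κR δ (m+3) (m+2) (m+2+1) = κR := by
      unfold gmat; grind
    rw [g1, g2, g3, i1, show m + 2 + 1 = m + 3 by ring, i2]
    push_cast
    rw [show (2 - ((m:ℤ)+3)) = -m-1 by ring, show (3 - ((m:ℤ)+3)) = -m by ring]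
    ring
  · intro j hj; unfold gmat; grind
  · intro j hj; unfold gmat; grind
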